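/- Fix D ∈ ℍ^{m×n}, Ω ⊆ Fin m × Fin n, and λ > 0. Let Z^k = (A^k, B^k, X^k) satisfy the LRQD recurrences (X^k_{ij} = D_{ij} on Ω and = (A^k·B^k)_{ij} off Ω; A^{k+1} = (X^k·(B^k)ᴴ + λ·A^k)·(B^k·(B^k)ᴴ + λ·I)⁻¹; B^{k+1} = ((A^{k+1})ᴴ·A^{k+1} + λ·I)⁻¹·((A^{k+1})ᴴ·X^k + λ·B^k)), let f(A,B,X) = ½‖A·B − X‖_F². Assume {Z^k} is bounded and converges to Z#, and that the Kurdyka–Łojasiewicz inequality with exponent θ = 1/2 holds along the sequence: there exists μ > 0 such that |f(Z^k) − f(Z#)|^{1/2} ≤ μ·G(Z^k) for all k. Then the convergence is R-linear: there exist σ ∈ [0, 1) and β > 0 such that ‖Z^k − Z#‖ ≤ β·σ^k for all k. -/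

import Mathlib

open scoped Quaternion Matrix
open Filter

/-- The Frobenius norm of a quaternion matrix. -/
noncomputable def frob {m n : ℕ} (A : Matrix (Fin m) (Fin n) ℍ[ℝ]) : ℝ :=
  Real.sqrt (∑ i, ∑ j, ‖A i j‖ ^ 2)

/-- The norm of a triple (A, B, X). -/
noncomputable def tnorm {m r n : ℕ} (A : Matrix (Fin m) (Fin r) ℍ[ℝ])
    (B : Matrix (Fin r) (Fin n) ℍ[ℝ]) (X : Matrix (Fin m) (Fin n) ℍ[ℝ]) : ℝ :=
  Real.sqrt (frob A ^ 2 + frob B ^ 2 + frob X ^ 2)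

/-- The projected-gradient norm G(A,B,X). -/
noncomputable def pgnorm {m r n : ℕ} (Ω : Set (Fin m × Fin n)) [DecidablePred (· ∈ Ω)]
    (A : Matrix (Fin m) (Fin r) ℍ[ℝ]) (B : Matrix (Fin r) (Fin n) ℍ[ℝ])
    (X : Matrix (Fin m) (Fin n) ℍ[ℝ]) : ℝ :=
  Real.sqrt (frob ((A * B - X) * Bᴴ) ^ 2 + frob (Aᴴ * (A * B - X)) ^ 2 +
    ∑ p : Fin m × Fin n, if p ∈ Ω then 0 else ‖(X - A * B) p.1 p.2‖ ^ 2)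

section aux

theorem le_sq_aux {x y : ℝ} (h : x ^ 2 ≤ y ^ 2) (hy : 0 ≤ y) : x ≤ y :=
  (abs_le_of_sq_le_sq' h hy).2

variable {l m n r : ℕ}

theorem frob_nonneg' (A : Matrix (Fin m) (Fin n) ℍ[ℝ]) : 0 ≤ frob A := Real.sqrt_nonneg _

theorem frob_sq' (A : Matrix (Fin m) (Fin n) ℍ[ℝ]) : frob A ^ 2 = ∑ i, ∑ j, ‖A i j‖ ^ 2 :=
  Real.sq_sqrt (by positivity)

section normed
attribute [local instance] Matrix.frobeniusNormedAddCommGroup Matrix.frobeniusNormedSpace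

theorem frob_eq_norm (A : Matrix (Fin m) (Fin n) ℍ[ℝ]) : frob A = ‖A‖ := by
  rw [Matrix.frobenius_norm_def, frob, Real.sqrt_eq_rpow]
  simp

theorem frob_add_le (A B : Matrix (Fin m) (Fin n) ℍ[ℝ]) : frob (A + B) ≤ frob A + frob B := by
  simp only [frob_eq_norm]; exact norm_add_le _ _

theorem frob_sub_le (A B : Matrix (Fin m) (Fin n) ℍ[ℝ]) : frob (A - B) ≤ frob A + frob B := by
  simp only [frob_eq_norm]; exact norm_sub_le _ _

theorem frob_sub_comm (A B : Matrix (Fin m) (Fin n) ℍ[ℝ]) : frob (A - B) = frob (B - A) := by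
  simp only [frob_eq_norm]; exact norm_sub_rev _ _

theorem frob_smul' (c : ℝ) (hc : 0 ≤ c) (A : Matrix (Fin m) (Fin n) ℍ[ℝ]) :
    frob (c • A) = c * frob A := by
  simp only [frob_eq_norm]; rw [norm_smul, Real.norm_of_nonneg hc]

theorem frob_eq_zero (A : Matrix (Fin m) (Fin n) ℍ[ℝ]) (h : frob A = 0) : A = 0 := by
  rw [frob_eq_norm] at h; exact norm_eq_zero.1 h

theorem frob_geom (A : ℕ → Matrix (Fin m) (Fin n) ℍ[ℝ]) (A0 : Matrix (Fin m) (Fin n) ℍ[ℝ])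
    (h : Tendsto (fun k => frob (A k - A0)) atTop (nhds 0)) (C s : ℝ) (hs : s < 1)
    (hC : ∀ k, frob (A k - A (k + 1)) ≤ C * s ^ k) (k : ℕ) :
    frob (A k - A0) ≤ C * s ^ k / (1 - s) := by
  simp only [frob_eq_norm] at h
  have h1 := tendsto_iff_norm_sub_tendsto_zero.2 h
  have := dist_le_of_le_geometric_of_tendsto s C hs
    (fun k => by rw [dist_eq_norm, ← frob_eq_norm]; exact hC k) h1 k
  rwa [dist_eq_norm, ← frob_eq_norm] at this

end normed

theorem frob_conj (A : Matrix (Fin m) (Fin n) ℍ[ℝ]) : frob Aᴴ = frob A := by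
  unfold frob
  rw [Finset.sum_comm]
  simp [Matrix.conjTranspose_apply]

theorem frob_mul_le (A : Matrix (Fin l) (Fin m) ℍ[ℝ]) (B : Matrix (Fin m) (Fin n) ℍ[ℝ]) :
    frob (A * B) ≤ frob A * frob B := by
  apply le_sq_aux _ (mul_nonneg (frob_nonneg' _) (frob_nonneg' _))
  rw [mul_pow, frob_sq', frob_sq', frob_sq', Finset.sum_mul]
  refine Finset.sum_le_sum fun i _ => ?_
  rw [Finset.sum_comm (f := fun i j => ‖B i j‖ ^ 2), Finset.mul_sum]
  refine Finset.sum_le_sum fun j _ => ?_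
  rw [Matrix.mul_apply]
  calc ‖∑ k, A i k * B k j‖ ^ 2 ≤ (∑ k, ‖A i k‖ * ‖B k j‖) ^ 2 := by
        gcongr
        refine (norm_sum_le _ _).trans ?_
        simp
    _ ≤ _ := Finset.sum_mul_sq_le_sq_mul_sq _ _ _

noncomputable def ipr (U V : Matrix (Fin m) (Fin n) ℍ[ℝ]) : ℝ :=
  ∑ i, ((U * Vᴴ) i i).re

theorem ipr_self (U : Matrix (Fin m) (Fin n) ℍ[ℝ]) : ipr U U = frob U ^ 2 := by
  rw [frob_sq', ipr]
  refine Finset.sum_congr rfl fun i _ => ?_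
  rw [Matrix.mul_apply]
  have : ∀ (f : Fin n → ℍ[ℝ]), (∑ j, f j).re = ∑ j, (f j).re := fun f =>
    map_sum (⟨⟨fun q : ℍ[ℝ] => q.re, rfl⟩, fun _ _ => rfl⟩ : ℍ[ℝ] →+ ℝ) f Finset.univ
  rw [this]
  refine Finset.sum_congr rfl fun j _ => ?_
  rw [Matrix.conjTranspose_apply, ← Quaternion.inner_def, real_inner_self_eq_norm_sq]

theorem ipr_add_left (U V W : Matrix (Fin m) (Fin n) ℍ[ℝ]) :
    ipr (U + V) W = ipr U W + ipr V W := by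
  simp [ipr, Matrix.add_mul, Finset.sum_add_distrib]

theorem ipr_smul_left (c : ℝ) (U W : Matrix (Fin m) (Fin n) ℍ[ℝ]) :
    ipr (c • U) W = c * ipr U W := by
  simp [ipr, Finset.mul_sum]

theorem ipr_comm (U V : Matrix (Fin m) (Fin n) ℍ[ℝ]) : ipr U V = ipr V U := by
  unfold ipr
  refine Finset.sum_congr rfl fun i _ => ?_
  have : (V * Uᴴ) = (U * Vᴴ)ᴴ := by simp
  rw [this, Matrix.conjTranspose_apply, Quaternion.re_star]

theorem ipr_mul_right (U : Matrix (Fin l) (Fin n) ℍ[ℝ]) (W : Matrix (Fin l) (Fin m) ℍ[ℝ])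
    (B : Matrix (Fin m) (Fin n) ℍ[ℝ]) : ipr U (W * B) = ipr (U * Bᴴ) W := by
  simp [ipr, Matrix.conjTranspose_mul, Matrix.mul_assoc]

theorem frob_add_sq (U V : Matrix (Fin m) (Fin n) ℍ[ℝ]) :
    frob (U + V) ^ 2 = frob U ^ 2 + 2 * ipr U V + frob V ^ 2 := by
  rw [← ipr_self, ipr_add_left, ipr_comm U, ipr_comm V, ipr_add_left, ipr_add_left, ipr_self,
    ipr_self, ipr_comm V U]
  ring

theorem isUnit_gram (B : Matrix (Fin r) (Fin n) ℍ[ℝ]) (lam : ℝ) (hlam : 0 < lam) :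
    IsUnit (B * Bᴴ + lam • (1 : Matrix (Fin r) (Fin r) ℍ[ℝ])) := by
  have : IsArtinianRing (Matrix (Fin r) (Fin r) ℍ[ℝ]) := IsArtinianRing.of_finite ℝ _
  rw [IsArtinianRing.isUnit_iff_isRightRegular, isRightRegular_iff_left_eq_zero_of_mul]
  intro W hW
  have h1 : ipr (W * (B * Bᴴ + lam • (1 : Matrix (Fin r) (Fin r) ℍ[ℝ]))) W = 0 := by
    rw [hW]; simp [ipr]
  rw [Matrix.mul_add, ipr_add_left, ← Matrix.mul_assoc, ← ipr_mul_right, ipr_self,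
    Matrix.mul_smul, Matrix.mul_one, ipr_smul_left, ipr_self] at h1
  apply frob_eq_zero
  have h2 : frob W ^ 2 = 0 := by
    have := sq_nonneg (frob (W * B))
    have := sq_nonneg (frob W)
    nlinarith
  exact pow_eq_zero_iff (two_ne_zero) |>.1 h2

theorem descent (A A' : Matrix (Fin m) (Fin r) ℍ[ℝ]) (B : Matrix (Fin r) (Fin n) ℍ[ℝ])
    (X : Matrix (Fin m) (Fin n) ℍ[ℝ]) (lam : ℝ)
    (h : (A' * B - X) * Bᴴ = lam • (A - A')) :
    frob (A' * B - X) ^ 2 + 2 * lam * frob (A - A') ^ 2 ≤ frob (A * B - X) ^ 2 := by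
  have e : A * B - X = (A' * B - X) + (A - A') * B := by rw [Matrix.sub_mul]; abel
  rw [e, frob_add_sq, ipr_mul_right, h, ipr_smul_left, ipr_self]
  nlinarith [sq_nonneg (frob ((A - A') * B))]

theorem real_rate (f : ℕ → ℝ) (s K : ℝ) (hf : ∀ k, 0 ≤ f k) (hd : ∀ k, f (k + 1) ≤ f k)
    (hK : ∀ k, |f k - s| ≤ K * (f k - f (k + 1))) :
    ∃ C q : ℝ, 0 ≤ C ∧ 0 < q ∧ q < 1 ∧ ∀ k, f k - f (k + 1) ≤ C * q ^ k := by
  have hanti : Antitone f := antitone_nat_of_succ_le hd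
  have hlim := tendsto_atTop_ciInf hanti ⟨0, by rintro _ ⟨k, rfl⟩; exact hf k⟩
  have hz : Tendsto (fun k => K * (f k - f (k + 1))) atTop (nhds 0) := by
    simpa using (hlim.sub (hlim.comp (tendsto_add_atTop_nat 1))).const_mul K
  have hs : Tendsto f atTop (nhds s) := by
    rw [tendsto_iff_norm_sub_tendsto_zero]
    exact squeeze_zero (fun _ => norm_nonneg _) hK hz
  have hge : ∀ k, s ≤ f k := fun k => hanti.le_of_tendsto hs k
  set K' := max K 2 with hK'
  have hK2 : 2 ≤ K' := le_max_right _ _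
  have hKK : K ≤ K' := le_max_left _ _
  have hq : 0 < 1 - 1 / K' := by
    rw [sub_pos, div_lt_one (by linarith)]; linarith
  have step : ∀ k, f (k + 1) - s ≤ (1 - 1 / K') * (f k - s) := by
    intro k
    have h1 : f k - s ≤ K' * (f k - f (k + 1)) :=
      (le_abs_self _).trans ((hK k).trans (mul_le_mul_of_nonneg_right hKK (by linarith [hd k])))
    have h2 : (f k - s) / K' ≤ f k - f (k + 1) := by
      rw [div_le_iff₀ (by linarith)]; linarith
    have : (1 - 1 / K') * (f k - s) = f k - s - (f k - s) / K' := by ring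
    linarith
  refine ⟨f 0 - s, 1 - 1 / K', by linarith [hge 0], hq, ?_, fun k => ?_⟩
  · have : 0 < 1 / K' := by positivity
    linarith
  · have : f k - s ≤ (f 0 - s) * (1 - 1 / K') ^ k := by
      induction k with
      | zero => simp
      | succ k ih =>
        calc _ ≤ _ := step k
          _ ≤ (1 - 1 / K') * ((f 0 - s) * (1 - 1 / K') ^ k) := by gcongr
          _ = _ := by ring
    linarith [hge (k + 1)]

theorem frob_mono (U V : Matrix (Fin m) (Fin n) ℍ[ℝ]) (h : ∀ i j, ‖U i j‖ ≤ ‖V i j‖) :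
    frob U ≤ frob V := by
  unfold frob
  gcongr with i _ j _
  exact h i j

theorem conj_smul_aux (c : ℝ) (U : Matrix (Fin m) (Fin n) ℍ[ℝ]) : (c • U)ᴴ = c • Uᴴ := by
  ext i j <;> simp

end aux

/-- R-linear convergence of the LRQD sequence under the KL inequality with
exponent θ = 1/2. -/
theorem LRQD_linear_rate {m r n : ℕ}
    (D : Matrix (Fin m) (Fin n) ℍ[ℝ]) (Ω : Set (Fin m × Fin n)) [DecidablePred (· ∈ Ω)]
    (lam : ℝ) (hlam : 0 < lam)
    (A : ℕ → Matrix (Fin m) (Fin r) ℍ[ℝ]) (B : ℕ → Matrix (Fin r) (Fin n) ℍ[ℝ])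
    (X : ℕ → Matrix (Fin m) (Fin n) ℍ[ℝ])
    (hXin : ∀ k, ∀ p ∈ Ω, X k p.1 p.2 = D p.1 p.2)
    (hXout : ∀ k, ∀ p : Fin m × Fin n, p ∉ Ω → X k p.1 p.2 = (A k * B k) p.1 p.2)
    (hA : ∀ k, A (k + 1) = (X k * (B k)ᴴ + lam • A k) *
      Ring.inverse (B k * (B k)ᴴ + lam • (1 : Matrix (Fin r) (Fin r) ℍ[ℝ])))
    (hB : ∀ k, B (k + 1) =
      Ring.inverse ((A (k + 1))ᴴ * A (k + 1) + lam • (1 : Matrix (Fin r) (Fin r) ℍ[ℝ])) *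
      ((A (k + 1))ᴴ * X k + lam • B k))
    (hbdd : ∃ M : ℝ, ∀ k, frob (A k) ≤ M ∧ frob (B k) ≤ M ∧ frob (X k) ≤ M)
    (Asharp : Matrix (Fin m) (Fin r) ℍ[ℝ]) (Bsharp : Matrix (Fin r) (Fin n) ℍ[ℝ])
    (Xsharp : Matrix (Fin m) (Fin n) ℍ[ℝ])
    (hconv : Tendsto (fun k => tnorm (A k - Asharp) (B k - Bsharp) (X k - Xsharp))
      atTop (nhds 0))
    (μ : ℝ) (hμ : 0 < μ)
    (hKL : ∀ k, |(1 / 2) * frob (A k * B k - X k) ^ 2 -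
        (1 / 2) * frob (Asharp * Bsharp - Xsharp) ^ 2| ^ ((1 : ℝ) / 2) ≤
      μ * pgnorm Ω (A k) (B k) (X k)) :
    ∃ σ β : ℝ, 0 ≤ σ ∧ σ < 1 ∧ 0 < β ∧
      ∀ k, tnorm (A k - Asharp) (B k - Bsharp) (X k - Xsharp) ≤ β * σ ^ k := by
  obtain ⟨M, hM⟩ := hbdd
  have hM0 : 0 ≤ M := (frob_nonneg' _).trans (hM 0).1
  -- normal equations
  have nA : ∀ k, (A (k + 1) * B k - X k) * (B k)ᴴ = lam • (A k - A (k + 1)) := by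
    intro k
    have h1 : A (k + 1) * (B k * (B k)ᴴ + lam • (1 : Matrix (Fin r) (Fin r) ℍ[ℝ]))
        = X k * (B k)ᴴ + lam • A k := by
      rw [hA k, Matrix.mul_assoc, Ring.inverse_mul_cancel _ (isUnit_gram (B k) lam hlam),
        Matrix.mul_one]
    rw [Matrix.mul_add, Matrix.mul_smul, Matrix.mul_one, ← Matrix.mul_assoc] at h1
    rw [Matrix.sub_mul, smul_sub, sub_eq_sub_iff_add_eq_add, h1, add_comm]
  have nB : ∀ k, (A (k + 1))ᴴ * (A (k + 1) * B (k + 1) - X k) = lam • (B k - B (k + 1)) := by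
    intro k
    have hu := isUnit_gram ((A (k + 1))ᴴ) lam hlam
    rw [Matrix.conjTranspose_conjTranspose] at hu
    have h1 : ((A (k + 1))ᴴ * A (k + 1) + lam • (1 : Matrix (Fin r) (Fin r) ℍ[ℝ])) * B (k + 1)
        = (A (k + 1))ᴴ * X k + lam • B k := by
      rw [hB k, ← Matrix.mul_assoc, Ring.mul_inverse_cancel _ hu, Matrix.one_mul]
    rw [Matrix.add_mul, Matrix.smul_mul, Matrix.one_mul, Matrix.mul_assoc] at h1
    rw [Matrix.mul_sub, smul_sub, sub_eq_sub_iff_add_eq_add, h1, add_comm]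
  set a : ℕ → ℝ := fun k => frob (A k - A (k + 1)) with ha
  set b : ℕ → ℝ := fun k => frob (B k - B (k + 1)) with hb
  have ha0 : ∀ k, 0 ≤ a k := fun k => frob_nonneg' _
  have hb0 : ∀ k, 0 ≤ b k := fun k => frob_nonneg' _
  set f : ℕ → ℝ := fun k => (1 / 2) * frob (A k * B k - X k) ^ 2 with hf
  have dec : ∀ k, lam * (a k ^ 2 + b k ^ 2) ≤ f k - f (k + 1) := by
    intro k
    have d1 := descent (A k) (A (k + 1)) (B k) (X k) lam (nA k)
    have d2 := descent ((B k)ᴴ) ((B (k + 1))ᴴ) ((A (k + 1))ᴴ) ((X k)ᴴ) lam (by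
      have := congrArg Matrix.conjTranspose (nB k)
      simpa [conj_smul_aux] using this)
    simp only [← Matrix.conjTranspose_mul, ← Matrix.conjTranspose_sub, frob_conj] at d2
    have d3 : frob (A (k + 1) * B (k + 1) - X (k + 1)) ≤ frob (A (k + 1) * B (k + 1) - X k) := by
      apply frob_mono
      intro i j
      by_cases hp : (i, j) ∈ Ω
      · have e1 := hXin k _ hp
        have e2 := hXin (k + 1) _ hp
        simp only at e1 e2
        simp [e1, e2]
      · have e2 := hXout (k + 1) _ hp
        simp only at e2
        simp [e2]
    have d4 := pow_le_pow_left₀ (frob_nonneg' _) d3 2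
    simp only [ha, hb, hf]
    linarith
  have prod : ∀ k, frob (A k * B k - A (k + 1) * B (k + 1)) ≤ M * (a k + b k) := by
    intro k
    have e : A k * B k - A (k + 1) * B (k + 1)
        = (A k - A (k + 1)) * B k + A (k + 1) * (B k - B (k + 1)) := by
      rw [Matrix.sub_mul, Matrix.mul_sub]; abel
    have h1 : frob ((A k - A (k + 1)) * B k) ≤ a k * M :=
      (frob_mul_le _ _).trans (mul_le_mul_of_nonneg_left (hM k).2.1 (ha0 k))
    have h2 : frob (A (k + 1) * (B k - B (k + 1))) ≤ M * b k :=
      (frob_mul_le _ _).trans (mul_le_mul_of_nonneg_right (hM (k + 1)).1 (hb0 k))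
    rw [e]
    linarith [frob_add_le ((A k - A (k + 1)) * B k) (A (k + 1) * (B k - B (k + 1)))]
  have hXd : ∀ k, frob (X k - X (k + 1)) ≤ M * (a k + b k) := by
    intro k
    refine le_trans (frob_mono _ _ fun i j => ?_) (prod k)
    by_cases hp : (i, j) ∈ Ω
    · have e1 := hXin k _ hp
      have e2 := hXin (k + 1) _ hp
      simp only at e1 e2
      simp [e1, e2]
    · have e1 := hXout k _ hp
      have e2 := hXout (k + 1) _ hp
      simp only at e1 e2
      simp [e1, e2]
  set C : ℝ := lam + 2 * M ^ 2 + M with hC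
  have hC0 : 0 ≤ C := by positivity
  have g1 : ∀ k, frob ((A k * B k - X k) * (B k)ᴴ) ≤ C * (a k + b k) := by
    intro k
    have e : (A k * B k - X k) * (B k)ᴴ
        = lam • (A k - A (k + 1)) + ((A k - A (k + 1)) * B k) * (B k)ᴴ := by
      rw [← nA k, ← Matrix.add_mul, Matrix.sub_mul (A k)]; congr 1; abel
    have h1 : frob ((A k - A (k + 1)) * B k) ≤ a k * M :=
      (frob_mul_le _ _).trans (mul_le_mul_of_nonneg_left (hM k).2.1 (ha0 k))
    have h2 : frob (((A k - A (k + 1)) * B k) * (B k)ᴴ) ≤ (a k * M) * M := by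
      refine (frob_mul_le _ _).trans ?_
      rw [frob_conj]
      exact mul_le_mul h1 (hM k).2.1 (frob_nonneg' _) (mul_nonneg (ha0 k) hM0)
    have h3 := frob_add_le (lam • (A k - A (k + 1))) (((A k - A (k + 1)) * B k) * (B k)ᴴ)
    rw [frob_smul' _ hlam.le, ← e] at h3
    have : frob ((A k * B k - X k) * (B k)ᴴ) ≤ lam * a k + a k * M * M := by
      refine h3.trans ?_
      gcongr
    have p1 := mul_nonneg hlam.le (hb0 k)
    have p2 := mul_nonneg (sq_nonneg M) (ha0 k)
    have p3 := mul_nonneg (sq_nonneg M) (hb0 k)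
    have p4 := mul_nonneg hM0 (ha0 k)
    have p5 := mul_nonneg hM0 (hb0 k)
    rw [hC]; nlinarith
  have g2 : ∀ k, frob ((A k)ᴴ * (A k * B k - X k)) ≤ C * (a k + b k) := by
    intro k
    have e : (A k)ᴴ * (A k * B k - X k)
        = lam • (B k - B (k + 1)) + (A k - A (k + 1))ᴴ * (A k * B k - X k)
          + (A (k + 1))ᴴ * (A k * B k - A (k + 1) * B (k + 1)) := by
      rw [← nB k, Matrix.conjTranspose_sub]
      simp only [Matrix.sub_mul, Matrix.mul_sub]; abel
    have h0 : frob (A k * B k - X k) ≤ M * M + M := by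
      refine (frob_sub_le _ _).trans ?_
      have := (frob_mul_le (A k) (B k)).trans
        (mul_le_mul (hM k).1 (hM k).2.1 (frob_nonneg' _) hM0)
      linarith [(hM k).2.2]
    have h1 : frob ((A k - A (k + 1))ᴴ * (A k * B k - X k)) ≤ a k * (M * M + M) := by
      refine (frob_mul_le _ _).trans ?_
      rw [frob_conj]
      exact mul_le_mul_of_nonneg_left h0 (ha0 k)
    have h2 : frob ((A (k + 1))ᴴ * (A k * B k - A (k + 1) * B (k + 1)))
        ≤ M * (M * (a k + b k)) := by
      refine (frob_mul_le _ _).trans ?_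
      rw [frob_conj]
      exact mul_le_mul (hM (k + 1)).1 (prod k) (frob_nonneg' _) hM0
    have h3 := frob_add_le (lam • (B k - B (k + 1)) + (A k - A (k + 1))ᴴ * (A k * B k - X k))
      ((A (k + 1))ᴴ * (A k * B k - A (k + 1) * B (k + 1)))
    have h4 := frob_add_le (lam • (B k - B (k + 1))) ((A k - A (k + 1))ᴴ * (A k * B k - X k))
    rw [frob_smul' _ hlam.le] at h4
    rw [← e] at h3
    have h5 : frob ((A k)ᴴ * (A k * B k - X k))
        ≤ lam * b k + a k * (M * M + M) + M * (M * (a k + b k)) := by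
      have : lam * frob (B k - B (k + 1)) = lam * b k := rfl
      linarith
    have p1 := mul_nonneg hlam.le (ha0 k)
    have p3 := mul_nonneg (sq_nonneg M) (hb0 k)
    have p5 := mul_nonneg hM0 (hb0 k)
    rw [hC]; nlinarith
  have g : ∀ k, pgnorm Ω (A k) (B k) (X k) ^ 2 ≤ 4 * C ^ 2 * (a k ^ 2 + b k ^ 2) := by
    intro k
    have hz : (∑ p : Fin m × Fin n,
        if p ∈ Ω then (0 : ℝ) else ‖(X k - A k * B k) p.1 p.2‖ ^ 2) = 0 := by
      refine Finset.sum_eq_zero fun p _ => ?_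
      split_ifs with hp
      · rfl
      · simp [hXout k p hp]
    rw [pgnorm, hz, add_zero, Real.sq_sqrt (by positivity)]
    have q1 := pow_le_pow_left₀ (frob_nonneg' _) (g1 k) 2
    have q2 := pow_le_pow_left₀ (frob_nonneg' _) (g2 k) 2
    nlinarith [mul_nonneg (sq_nonneg C) (sq_nonneg (a k - b k))]
  have hf0 : ∀ k, 0 ≤ f k := fun k => by simp only [hf]; positivity
  have hfd : ∀ k, f (k + 1) ≤ f k := fun k => by
    have := dec k
    have : 0 ≤ lam * (a k ^ 2 + b k ^ 2) := by positivity
    linarith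
  obtain ⟨C1, q, hC1, hq0, hq1, hrate⟩ := real_rate f
    ((1 / 2) * frob (Asharp * Bsharp - Xsharp) ^ 2) (4 * C ^ 2 * μ ^ 2 / lam) hf0 hfd (by
      intro k
      have h1 := hKL k
      rw [← Real.sqrt_eq_rpow] at h1
      have h2 := pow_le_pow_left₀ (Real.sqrt_nonneg _) h1 2
      rw [Real.sq_sqrt (abs_nonneg _), mul_pow] at h2
      have h3 : a k ^ 2 + b k ^ 2 ≤ (f k - f (k + 1)) / lam := by
        rw [le_div_iff₀ hlam]; linarith [dec k]
      calc _ ≤ _ := h2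
        _ ≤ μ ^ 2 * (4 * C ^ 2 * (a k ^ 2 + b k ^ 2)) := by gcongr; exact g k
        _ ≤ μ ^ 2 * (4 * C ^ 2 * ((f k - f (k + 1)) / lam)) := by gcongr
        _ = _ := by ring)
  set s := Real.sqrt q with hs
  have hs0 : 0 < s := Real.sqrt_pos.2 hq0
  have hs1 : s < 1 := by rw [hs, Real.sqrt_lt' one_pos]; simpa using hq1
  have hss : s ^ 2 = q := Real.sq_sqrt hq0.le
  set E := Real.sqrt (C1 / lam) with hE
  have hE0 : 0 ≤ E := Real.sqrt_nonneg _
  have hEE : E ^ 2 = C1 / lam := Real.sq_sqrt (by positivity)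
  have hab : ∀ k, a k ^ 2 + b k ^ 2 ≤ (E * s ^ k) ^ 2 := by
    intro k
    have : (E * s ^ k) ^ 2 = C1 * q ^ k / lam := by
      rw [mul_pow, hEE, ← pow_mul, mul_comm k, pow_mul, hss]; ring
    rw [this, le_div_iff₀ hlam]
    linarith [dec k, hrate k]
  have hak : ∀ k, a k ≤ E * s ^ k := fun k =>
    le_sq_aux (by nlinarith [hab k, sq_nonneg (b k)]) (by positivity)
  have hbk : ∀ k, b k ≤ E * s ^ k := fun k =>
    le_sq_aux (by nlinarith [hab k, sq_nonneg (a k)]) (by positivity)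
  have hxk : ∀ k, frob (X k - X (k + 1)) ≤ (2 * M * E) * s ^ k := fun k => by
    have := mul_le_mul_of_nonneg_left (add_le_add (hak k) (hbk k)) hM0
    linarith [hXd k]
  have tA : Tendsto (fun k => frob (A k - Asharp)) atTop (nhds 0) :=
    squeeze_zero (fun _ => frob_nonneg' _) (fun k => Real.le_sqrt_of_sq_le (by
      nlinarith [sq_nonneg (frob (B k - Bsharp)), sq_nonneg (frob (X k - Xsharp))])) hconv
  have tB : Tendsto (fun k => frob (B k - Bsharp)) atTop (nhds 0) :=
    squeeze_zero (fun _ => frob_nonneg' _) (fun k => Real.le_sqrt_of_sq_le (by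
      nlinarith [sq_nonneg (frob (A k - Asharp)), sq_nonneg (frob (X k - Xsharp))])) hconv
  have tX : Tendsto (fun k => frob (X k - Xsharp)) atTop (nhds 0) :=
    squeeze_zero (fun _ => frob_nonneg' _) (fun k => Real.le_sqrt_of_sq_le (by
      nlinarith [sq_nonneg (frob (A k - Asharp)), sq_nonneg (frob (B k - Bsharp))])) hconv
  have rA := frob_geom A Asharp tA E s hs1 hak
  have rB := frob_geom B Bsharp tB E s hs1 hbk
  have rX := frob_geom X Xsharp tX (2 * M * E) s hs1 hxk
  have h1s : 0 < 1 - s := by linarith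
  refine ⟨s, (2 * E + 2 * M * E) / (1 - s) + 1, hs0.le, hs1, by positivity, fun k => ?_⟩
  have hsum : tnorm (A k - Asharp) (B k - Bsharp) (X k - Xsharp)
      ≤ frob (A k - Asharp) + frob (B k - Bsharp) + frob (X k - Xsharp) := by
    have p1 := frob_nonneg' (A k - Asharp)
    have p2 := frob_nonneg' (B k - Bsharp)
    have p3 := frob_nonneg' (X k - Xsharp)
    refine Real.sqrt_le_iff.2 ⟨by positivity, ?_⟩
    nlinarith [mul_nonneg p1 p2, mul_nonneg p1 p3, mul_nonneg p2 p3]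
  have e : ((2 * E + 2 * M * E) / (1 - s) + 1) * s ^ k
      = E * s ^ k / (1 - s) + E * s ^ k / (1 - s) + (2 * M * E) * s ^ k / (1 - s) + s ^ k := by
    ring
  rw [e]
  have := pow_pos hs0 k
  linarith [rA k, rB k, rX k]
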